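/- Let (G,P) be a quasi-lattice ordered group and let v,w,s,t ∈ P be such that v and w have a common upper bound in P and vs and wt have a common upper bound in P. Set a = v∨w, f = v⁻¹a and g = w⁻¹a (which lie in P). Then: f and s have a common upper bound and f∨s = v⁻¹(vs∨w), so that f⁻¹(f∨s) = a⁻¹(vs∨w); similarly g and t have a common upper bound and g⁻¹(g∨t) = a⁻¹(v∨wt); and the elements f⁻¹(f∨s) and g⁻¹(g∨t) have a common upper bound with f⁻¹(f∨s) ∨ g⁻¹(g∨t) = a⁻¹(vs∨wt). -/

import Mathlib

/-!
The order `QLle P` is left invariant, so left translation by `v` carries common upper bounds in `P`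
of `f = v⁻¹a` and `s` to common upper bounds of `a = v ∨ w` and `vs`. As `v ≤ vs`, the latter are
exactly the common upper bounds of `vs` and `w`; hence `f ∨ s = v⁻¹(vs ∨ w)` (`IsJoin.translate`),
and symmetrically for `g` and `t`. Translating by `a` in the same way, the common upper bounds of
`a⁻¹(vs ∨ w)` and `a⁻¹(v ∨ wt)` correspond to those of `vs ∨ w` and `v ∨ wt`, which are the common
upper bounds of `vs` and `wt`. All the joins involved exist because `vs ∨ wt` bounds everything.
-/

noncomputable section

/-- `s ≤ t` in the left-invariant partial order induced by the submonoid `P` of `G`. -/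
def QLle {G : Type*} [Group G] (P : Submonoid G) (s t : G) : Prop := s⁻¹ * t ∈ P

/-- `(G,P)` is a quasi-lattice ordered group: `P ∩ P⁻¹ = {e}` and any two elements
of `P` with a common upper bound in `P` have a least common upper bound in `P`. -/
structure IsQLO {G : Type*} [Group G] (P : Submonoid G) : Prop where
  eq_one : ∀ g ∈ P, g⁻¹ ∈ P → g = 1
  exists_lub : ∀ s t : G, s ∈ P → t ∈ P →
    (∃ u ∈ P, QLle P s u ∧ QLle P t u) →
    ∃ v ∈ P, QLle P s v ∧ QLle P t v ∧ ∀ u ∈ P, QLle P s u → QLle P t u → QLle P v u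

/-- `s` and `t` in `P` have a common upper bound in `P`, i.e. `s ∨ t < ∞`. -/
def HasUB {G : Type*} [Group G] (P : Submonoid G) (s t : ↥P) : Prop :=
  ∃ u : ↥P, QLle P ↑s ↑u ∧ QLle P ↑t ↑u

/-- `v = s ∨ t`, the least common upper bound of `s` and `t` in `P`. -/
def IsJoin {G : Type*} [Group G] (P : Submonoid G) (s t v : ↥P) : Prop :=
  QLle P ↑s ↑v ∧ QLle P ↑t ↑v ∧ ∀ u : ↥P, QLle P ↑s ↑u → QLle P ↑t ↑u → QLle P ↑v ↑u



theorem QLle.trans {G : Type*} [Group G] {P : Submonoid G} {x y z : G}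
    (h : QLle P x y) (h' : QLle P y z) : QLle P x z := by
  have := P.mul_mem h h'
  simpa [QLle, mul_assoc] using this

theorem QLle.mul_left_iff {G : Type*} [Group G] {P : Submonoid G} (c x y : G) :
    QLle P (c * x) (c * y) ↔ QLle P x y := by
  simp [QLle, mul_assoc]

theorem QLle.inv_mul_left_iff {G : Type*} [Group G] {P : Submonoid G} (c x y : G) :
    QLle P (c⁻¹ * x) y ↔ QLle P x (c * y) := by
  simp [QLle, mul_assoc]

theorem QLle.self_mul {G : Type*} [Group G] {P : Submonoid G} (x : G) (p : ↥P) :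
    QLle P x (x * p) := by
  simp [QLle]

theorem IsJoin.symm {G : Type*} [Group G] {P : Submonoid G} {s t v : ↥P}
    (h : IsJoin P s t v) : IsJoin P t s v :=
  ⟨h.2.1, h.1, fun u h1 h2 => h.2.2 u h2 h1⟩

theorem IsQLO.exists_isJoin {G : Type*} [Group G] {P : Submonoid G} (hQL : IsQLO P)
    {s t : ↥P} (h : HasUB P s t) : ∃ v, IsJoin P s t v := by
  obtain ⟨u, h1, h2⟩ := h
  obtain ⟨v, hv, h3, h4, h5⟩ := hQL.exists_lub s t s.2 t.2 ⟨u, u.2, h1, h2⟩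
  exact ⟨⟨v, hv⟩, h3, h4, fun u => h5 u u.2⟩

/-- If `a = v ∨ w` and `f = v⁻¹a`, then `f ∨ s = v⁻¹(vs ∨ w)`: translation by `v` matches the
common upper bounds of `f` and `s` with those of `vs` and `w` above `v`, and all of the latter
are above `v`. -/
theorem IsJoin.translate {G : Type*} [Group G] {P : Submonoid G} {v w s a f m : ↥P}
    (ha : IsJoin P v w a) (hf : (f : G) = (v : G)⁻¹ * (a : G)) (hm : IsJoin P (v * s) w m) :
    ∃ n : ↥P, IsJoin P f s n ∧ (n : G) = (v : G)⁻¹ * (m : G) := by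
  have hvm : QLle P (v : G) m := (QLle.self_mul (v : G) s).trans hm.1
  refine ⟨⟨(v : G)⁻¹ * m, hvm⟩, ⟨?_, ?_, fun u hu1 hu2 => ?_⟩, rfl⟩
  · rw [hf, QLle.mul_left_iff]
    exact ha.2.2 m hvm hm.2.1
  · rw [← QLle.mul_left_iff (v : G), mul_inv_cancel_left]
    exact hm.1
  · rw [hf, QLle.inv_mul_left_iff] at hu1
    rw [QLle.inv_mul_left_iff]
    exact hm.2.2 (v * u) ((QLle.mul_left_iff (v : G) s u).2 hu2) (ha.2.1.trans hu1)

/-- In a quasi-lattice ordered group `(G,P)`, suppose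
`v, w, s, t ∈ P`, `a = v ∨ w < ∞`, `f = v⁻¹a`, `g = w⁻¹a`, and `vs ∨ wt < ∞`.
Then `f ∨ s` exists and equals `v⁻¹(vs ∨ w)` (so `f⁻¹(f∨s) = a⁻¹(vs ∨ w)`),
`g ∨ t` exists and equals `w⁻¹(v ∨ wt)` (so `g⁻¹(g∨t) = a⁻¹(v ∨ wt)`), and
`f⁻¹(f∨s) ∨ g⁻¹(g∨t)` exists and equals `a⁻¹(vs ∨ wt)`. -/
theorem qlo_join_quotients
    {G : Type*} [Group G] {P : Submonoid G} (hQL : IsQLO P)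
    (v w s t a f g : ↥P)
    (ha : IsJoin P v w a)
    (hf : (f : G) = (v : G)⁻¹ * (a : G)) (hg : (g : G) = (w : G)⁻¹ * (a : G))
    (hUB : HasUB P (v * s) (w * t)) :
    ∃ m1 m2 m3 m4 : ↥P,
      IsJoin P f s m1 ∧ IsJoin P (v * s) w m2 ∧
        (m1 : G) = (v : G)⁻¹ * (m2 : G) ∧
        (f : G)⁻¹ * (m1 : G) = (a : G)⁻¹ * (m2 : G) ∧
      IsJoin P g t m3 ∧ IsJoin P v (w * t) m4 ∧
        (m3 : G) = (w : G)⁻¹ * (m4 : G) ∧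
        (g : G)⁻¹ * (m3 : G) = (a : G)⁻¹ * (m4 : G) ∧
      ∃ q1 q2 : ↥P, (q1 : G) = (f : G)⁻¹ * (m1 : G) ∧ (q2 : G) = (g : G)⁻¹ * (m3 : G) ∧
        ∃ m5 m6 : ↥P, IsJoin P q1 q2 m5 ∧ IsJoin P (v * s) (w * t) m6 ∧
          (m5 : G) = (a : G)⁻¹ * (m6 : G) := by
  obtain ⟨m6, h6⟩ := hQL.exists_isJoin hUB
  have hv6 : QLle P (v : G) m6 := (QLle.self_mul (v : G) s).trans h6.1
  have hw6 : QLle P (w : G) m6 := (QLle.self_mul (w : G) t).trans h6.2.1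
  obtain ⟨m2, h2⟩ := hQL.exists_isJoin (s := v * s) (t := w) ⟨m6, h6.1, hw6⟩
  obtain ⟨m4, h4⟩ := hQL.exists_isJoin (s := v) (t := w * t) ⟨m6, hv6, h6.2.1⟩
  obtain ⟨m1, h1, e1⟩ := ha.translate hf h2
  obtain ⟨m3, h3, e3⟩ := ha.symm.translate hg h4.symm
  have hq1 : (f : G)⁻¹ * (m1 : G) = (a : G)⁻¹ * (m2 : G) := by rw [hf, e1]; group
  have hq2 : (g : G)⁻¹ * (m3 : G) = (a : G)⁻¹ * (m4 : G) := by rw [hg, e3]; group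
  refine ⟨m1, m2, m3, m4, h1, h2, e1, hq1, h3, h4, e3, hq2,
    ⟨_, h1.1⟩, ⟨_, h3.1⟩, rfl, rfl,
    ⟨(a : G)⁻¹ * m6, ha.2.2 m6 hv6 hw6⟩, m6, ⟨?_, ?_, fun u hu1 hu2 => ?_⟩, h6, rfl⟩
  · simp only [hq1, QLle.mul_left_iff]
    exact h2.2.2 m6 h6.1 hw6
  · simp only [hq2, QLle.mul_left_iff]
    exact h4.2.2 m6 hv6 h6.2.1
  · simp only [hq1, QLle.inv_mul_left_iff] at hu1
    simp only [hq2, QLle.inv_mul_left_iff] at hu2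
    rw [QLle.inv_mul_left_iff]
    exact h6.2.2 (a * u) (h2.1.trans hu1) (h4.2.1.trans hu2)
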